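/- arXiv:2302.14086 — 3 statements merged into one kernel-verified Lean document; each statement's English description precedes it below -/
import Mathlib

section
/- Assume that M and the quotient M/Σ_I for every subset I ⊆ {1,…,n} are projective R-modules, and that the collection M_1,…,M_n is distributive. Then for every I ⊆ {1,…,n}: (i) the R-linear map (M/Σ_I)^* → M^* dual to the canonical projection M → M/Σ_I is injective with image ⋂_{i∈I} M_i^∨, so (M/Σ_I)^* ≅ ⋂_{i∈I} M_i^∨; and (ii) the restriction map M^* → (Π_I)^* is surjective with kernel ∑_{i∈I} M_i^∨, so it induces an isomorphism M^*/∑_{i∈I} M_i^∨ ≅ (Π_I)^*. -/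
/-!
STATEMENT 1: if `M` and all quotients `M/Σ_I` are projective and the collection
`M_1, …, M_n` is distributive, then for every `I ⊆ {1,…,n}` the map dual to the projection
`M → M/Σ_I` is injective with image `⋂_{i∈I} M_i^∨` (so `(M/Σ_I)^* ≅ ⋂_{i∈I} M_i^∨`),
and the restriction map `M^* → (Π_I)^*` is surjective with kernel `∑_{i∈I} M_i^∨`
(so it induces an isomorphism `M^*/∑_{i∈I} M_i^∨ ≅ (Π_I)^*`).
-/

variable {R M : Type*} [CommRing R] [AddCommGroup M] [Module R M]

/-- `Σ_I = ∑_{i ∈ I} M_i` (with `Σ_∅ = 0`). -/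
abbrev sigmaSub {n : ℕ} (Mf : Fin n → Submodule R M) (I : Finset (Fin n)) : Submodule R M :=
  I.sup Mf

/-- `Π_I = ⋂_{i ∈ I} M_i` (with `Π_∅ = M`). -/
abbrev piSub {n : ℕ} (Mf : Fin n → Submodule R M) (I : Finset (Fin n)) : Submodule R M :=
  I.inf Mf

/-- The collection `M_1, …, M_n` is distributive if the sublattice of the lattice of
`R`-submodules of `M` generated by `{M_1, …, M_n}` under `+` (= `⊔`) and `∩` (= `⊓`)
is a distributive lattice. -/
def IsDistributiveFamily {n : ℕ} (Mf : Fin n → Submodule R M) : Prop :=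
  ∀ a ∈ latticeClosure (Set.range Mf), ∀ b ∈ latticeClosure (Set.range Mf),
    ∀ c ∈ latticeClosure (Set.range Mf), a ⊓ (b ⊔ c) = (a ⊓ b) ⊔ (a ⊓ c)

/-!
For submodules `p` and `q` of `N` there is a Mayer–Vietoris sequence
`0 → N/(p ∩ q) → N/p × N/q → N/(p + q) → 0`. When `N/(p + q)` is projective it splits, which has
two consequences: `N/(p ∩ q)` is projective as soon as `N/p` and `N/q` are, and every linear map on
`N` vanishing on `p ∩ q` is the sum of one vanishing on `p` and one vanishing on `q`, that is,
`(p ∩ q)^∨ = p^∨ + q^∨`.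

Distributivity gives `(M_j ∩ Π_I) + Σ_J = Σ_{J ∪ {j}} ∩ (Π_I + Σ_J)`, and the sum of the two
submodules on the right is `Π_I + Σ_{J ∪ {j}}`. So the first consequence shows by induction on `I`,
for all `J` simultaneously, that `M/(Π_I + Σ_J)` is projective. The case `J = ∅` makes restriction
to `Π_I` surjective, and the case `J = {j}` lets the second consequence compute `(Π_I)^∨`
inductively.
-/

section Lattice

variable {α : Type*} [Lattice α]

/-- A subset `s` of a lattice generates a distributive lattice if its closure under `⊔` and `⊓` is a
distributive lattice. The closure need not contain `⊥` or `⊤`. -/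
def GeneratesDistribLattice (s : Set α) : Prop :=
  ∀ a ∈ latticeClosure s, ∀ b ∈ latticeClosure s, ∀ c ∈ latticeClosure s,
    a ⊓ (b ⊔ c) = a ⊓ b ⊔ a ⊓ c

namespace GeneratesDistribLattice

theorem sup_inf_right {s : Set α} (hs : GeneratesDistribLattice s) {a b c : α}
    (ha : a ∈ latticeClosure s) (hb : b ∈ latticeClosure s) (hc : c ∈ latticeClosure s) :
    a ⊓ b ⊔ c = (a ⊔ c) ⊓ (b ⊔ c) := by
  have hac : a ⊔ c ∈ latticeClosure s := isSublattice_latticeClosure.supClosed ha hc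
  symm
  calc (a ⊔ c) ⊓ (b ⊔ c) = (a ⊔ c) ⊓ b ⊔ (a ⊔ c) ⊓ c := hs _ hac b hb c hc
    _ = b ⊓ (a ⊔ c) ⊔ c := by rw [inf_comm, inf_eq_right.2 (le_sup_right : c ≤ a ⊔ c)]
    _ = b ⊓ a ⊔ b ⊓ c ⊔ c := by rw [hs b hb a ha c hc]
    _ = a ⊓ b ⊔ c := by rw [sup_assoc, sup_eq_right.2 (inf_le_right : b ⊓ c ≤ c), inf_comm]

theorem inf_finsetInf_sup_finsetSup [BoundedOrder α] {ι : Type*} {f : ι → α}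
    (hf : GeneratesDistribLattice (Set.range f)) (j : ι) (I J : Finset ι) :
    f j ⊓ I.inf f ⊔ J.sup f = (f j ⊔ J.sup f) ⊓ (I.inf f ⊔ J.sup f) := by
  have mem_closure (i : ι) : f i ∈ latticeClosure (Set.range f) :=
    subset_latticeClosure (Set.mem_range_self i)
  rcases I.eq_empty_or_nonempty with rfl | hI
  · simp
  rcases J.eq_empty_or_nonempty with rfl | hJ
  · simp
  exact hf.sup_inf_right (mem_closure j)
    (isSublattice_latticeClosure.infClosed.finsetInf_mem hI fun i _ => mem_closure i)
    (isSublattice_latticeClosure.supClosed.finsetSup_mem hJ fun i _ => mem_closure i)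

end GeneratesDistribLattice

end Lattice

section Projective

variable {S N : Type*} [Ring S] [AddCommGroup N] [Module S N]

theorem exists_leftInverse_of_exact_of_projective {L P : Type*} [AddCommGroup L] [Module S L]
    [AddCommGroup P] [Module S P] [Module.Projective S P] {f : L →ₗ[S] N} {g : N →ₗ[S] P}
    (hfg : Function.Exact f g) (hf : Function.Injective f) (hg : Function.Surjective g) :
    ∃ r : N →ₗ[S] L, r ∘ₗ f = LinearMap.id :=
  ((hfg.split_tfae hf hg).out 0 1).1
    (g.exists_rightInverse_of_surjective (LinearMap.range_eq_top.2 hg))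

theorem exists_comp_subtype_eq {P : Type*} [AddCommGroup P] [Module S P] (p : Submodule S N)
    [Module.Projective S (N ⧸ p)] (φ : p →ₗ[S] P) : ∃ ψ : N →ₗ[S] P, ψ ∘ₗ p.subtype = φ := by
  obtain ⟨r, hr⟩ := exists_leftInverse_of_exact_of_projective
    (LinearMap.exact_subtype_mkQ p) p.injective_subtype p.mkQ_surjective
  exact ⟨φ ∘ₗ r, by rw [LinearMap.comp_assoc, hr, LinearMap.comp_id]⟩

variable (p q : Submodule S N)

/-- The first map `x ↦ (x, x)` of the Mayer–Vietoris sequence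
`0 → N/(p ∩ q) → N/p × N/q → N/(p + q) → 0`. -/
def quotInfToProd : N ⧸ (p ⊓ q) →ₗ[S] (N ⧸ p) × (N ⧸ q) :=
  (Submodule.factor inf_le_left).prod (Submodule.factor inf_le_right)

/-- The second map `(x, y) ↦ x - y` of the Mayer–Vietoris sequence
`0 → N/(p ∩ q) → N/p × N/q → N/(p + q) → 0`. -/
def quotProdToSup : (N ⧸ p) × (N ⧸ q) →ₗ[S] N ⧸ (p ⊔ q) :=
  (Submodule.factor le_sup_left).coprod (-Submodule.factor le_sup_right)

theorem quotInfToProd_mkQ (x : N) : quotInfToProd p q ((p ⊓ q).mkQ x) = (p.mkQ x, q.mkQ x) :=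
  rfl

theorem quotProdToSup_mkQ (x y : N) :
    quotProdToSup p q (p.mkQ x, q.mkQ y) = (p ⊔ q).mkQ (x - y) := by
  simp [quotProdToSup, sub_eq_add_neg]

theorem quotInfToProd_injective : Function.Injective (quotInfToProd p q) := by
  rw [injective_iff_map_eq_zero]
  intro x hx
  obtain ⟨x, rfl⟩ := Submodule.mkQ_surjective _ x
  rw [quotInfToProd_mkQ] at hx
  simpa using hx

theorem quotProdToSup_surjective : Function.Surjective (quotProdToSup p q) := by
  intro x
  obtain ⟨x, rfl⟩ := Submodule.mkQ_surjective _ x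
  exact ⟨(p.mkQ x, q.mkQ 0), by rw [quotProdToSup_mkQ, sub_zero]⟩

theorem exact_quotInfToProd_quotProdToSup :
    Function.Exact (quotInfToProd p q) (quotProdToSup p q) := by
  rintro ⟨x, y⟩
  obtain ⟨x, rfl⟩ := p.mkQ_surjective x
  obtain ⟨y, rfl⟩ := q.mkQ_surjective y
  constructor
  · intro h
    have hxy : x - y ∈ p ⊔ q := by
      rwa [quotProdToSup_mkQ, Submodule.mkQ_apply, Submodule.Quotient.mk_eq_zero] at h
    obtain ⟨a, ha, b, hb, hab⟩ := Submodule.mem_sup.1 hxy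
    refine ⟨(p ⊓ q).mkQ (x - a), Prod.ext ?_ ?_⟩
    · exact (Submodule.Quotient.eq p).2 (by simpa using ha)
    · have hb_eq : x - a - y = b := by rw [sub_right_comm, ← hab, add_sub_cancel_left]
      exact (Submodule.Quotient.eq q).2 (hb_eq ▸ hb)
  · rintro ⟨z, hz⟩
    obtain ⟨z, rfl⟩ := Submodule.mkQ_surjective _ z
    rw [← hz, quotInfToProd_mkQ, quotProdToSup_mkQ, sub_self, map_zero]

theorem exists_leftInverse_quotInfToProd [Module.Projective S (N ⧸ (p ⊔ q))] :
    ∃ r : (N ⧸ p) × (N ⧸ q) →ₗ[S] N ⧸ (p ⊓ q), r ∘ₗ quotInfToProd p q = LinearMap.id :=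
  exists_leftInverse_of_exact_of_projective (exact_quotInfToProd_quotProdToSup p q)
    (quotInfToProd_injective p q) (quotProdToSup_surjective p q)

theorem projective_quotient_inf [Module.Projective S (N ⧸ p)] [Module.Projective S (N ⧸ q)]
    [Module.Projective S (N ⧸ (p ⊔ q))] : Module.Projective S (N ⧸ (p ⊓ q)) := by
  obtain ⟨r, hr⟩ := exists_leftInverse_quotInfToProd p q
  exact Module.Projective.of_split _ r hr

theorem exists_add_eq_of_inf_le_ker {P : Type*} [AddCommGroup P] [Module S P]
    [Module.Projective S (N ⧸ (p ⊔ q))] {φ : N →ₗ[S] P} (hφ : p ⊓ q ≤ LinearMap.ker φ) :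
    ∃ φ₁ φ₂ : N →ₗ[S] P, p ≤ LinearMap.ker φ₁ ∧ q ≤ LinearMap.ker φ₂ ∧ φ₁ + φ₂ = φ := by
  obtain ⟨r, hr⟩ := exists_leftInverse_quotInfToProd p q
  let ψ : (N ⧸ p) × (N ⧸ q) →ₗ[S] P := (p ⊓ q).liftQ φ hφ ∘ₗ r
  have hψ (x : N) : ψ (p.mkQ x, q.mkQ x) = φ x := by
    have hrx : r (p.mkQ x, q.mkQ x) = (p ⊓ q).mkQ x := LinearMap.congr_fun hr ((p ⊓ q).mkQ x)
    rw [LinearMap.comp_apply, hrx, Submodule.mkQ_apply, Submodule.liftQ_apply]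
  refine ⟨ψ ∘ₗ LinearMap.inl S _ _ ∘ₗ p.mkQ, ψ ∘ₗ LinearMap.inr S _ _ ∘ₗ q.mkQ, ?_, ?_, ?_⟩
  · exact fun x hx => by simp [(Submodule.Quotient.mk_eq_zero p).2 hx, ← Prod.zero_eq_mk]
  · exact fun x hx => by simp [(Submodule.Quotient.mk_eq_zero q).2 hx, ← Prod.zero_eq_mk]
  · ext x
    simp only [LinearMap.add_apply, LinearMap.comp_apply, LinearMap.inl_apply,
      LinearMap.inr_apply, ← map_add, Prod.mk_add_mk, add_zero, zero_add, hψ]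

theorem projective_quotient_finsetInf_sup_finsetSup {ι : Type*} {f : ι → Submodule S N}
    (hf : GeneratesDistribLattice (Set.range f))
    (hQ : ∀ J : Finset ι, Module.Projective S (N ⧸ J.sup f)) (I J : Finset ι) :
    Module.Projective S (N ⧸ (I.inf f ⊔ J.sup f)) := by
  classical
  induction I using Finset.induction_on generalizing J with
  | empty =>
    have : Subsingleton (N ⧸ ((∅ : Finset ι).inf f ⊔ J.sup f)) :=
      Submodule.Quotient.subsingleton_iff.2 (by simp)
    infer_instance
  | insert j I _ ih =>
    have eq_inf : (insert j I).inf f ⊔ J.sup f = (insert j J).sup f ⊓ (I.inf f ⊔ J.sup f) := by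
      rw [Finset.inf_insert, Finset.sup_insert, hf.inf_finsetInf_sup_finsetSup]
    have sup_eq : (insert j J).sup f ⊔ (I.inf f ⊔ J.sup f) = I.inf f ⊔ (insert j J).sup f := by
      rw [sup_left_comm, sup_eq_left.2 (Finset.sup_mono (Finset.subset_insert j J))]
    have : Module.Projective S (N ⧸ ((insert j J).sup f ⊔ (I.inf f ⊔ J.sup f))) :=
      sup_eq ▸ ih (insert j J)
    have := hQ (insert j J)
    have := ih J
    rw [eq_inf]
    exact projective_quotient_inf _ _

theorem projective_quotient_finsetInf {ι : Type*} {f : ι → Submodule S N}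
    (hf : GeneratesDistribLattice (Set.range f))
    (hQ : ∀ J : Finset ι, Module.Projective S (N ⧸ J.sup f)) (I : Finset ι) :
    Module.Projective S (N ⧸ I.inf f) := by
  have := projective_quotient_finsetInf_sup_finsetSup hf hQ I ∅
  rwa [Finset.sup_empty, sup_bot_eq] at this

end Projective

section Dual

theorem dualRestrict_surjective_of_projective (p : Submodule R M) [Module.Projective R (M ⧸ p)] :
    Function.Surjective p.dualRestrict :=
  exists_comp_subtype_eq p

theorem dualAnnihilator_inf_of_projective (p q : Submodule R M)
    [Module.Projective R (M ⧸ (p ⊔ q))] :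
    (p ⊓ q).dualAnnihilator = p.dualAnnihilator ⊔ q.dualAnnihilator := by
  refine le_antisymm (fun φ hφ => ?_) (Submodule.sup_dualAnnihilator_le_inf p q)
  obtain ⟨φ₁, φ₂, hφ₁, hφ₂, hφ_eq⟩ :=
    exists_add_eq_of_inf_le_ker p q ((Submodule.mem_dualAnnihilator φ).1 hφ)
  exact Submodule.mem_sup.2 ⟨φ₁, (Submodule.mem_dualAnnihilator φ₁).2 hφ₁,
    φ₂, (Submodule.mem_dualAnnihilator φ₂).2 hφ₂, hφ_eq⟩

variable {ι : Type*}

theorem dualAnnihilator_finsetSup (f : ι → Submodule R M) (I : Finset ι) :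
    (I.sup f).dualAnnihilator = I.inf fun i => (f i).dualAnnihilator := by
  simp only [Finset.sup_eq_iSup, Finset.inf_eq_iInf, Submodule.dualAnnihilator_iSup_eq]

theorem dualAnnihilator_finsetInf {f : ι → Submodule R M}
    (hf : GeneratesDistribLattice (Set.range f))
    (hQ : ∀ J : Finset ι, Module.Projective R (M ⧸ J.sup f)) (I : Finset ι) :
    (I.inf f).dualAnnihilator = I.sup fun i => (f i).dualAnnihilator := by
  classical
  induction I using Finset.induction_on with
  | empty => simp
  | insert j I _ ih =>
    have : Module.Projective R (M ⧸ (f j ⊔ I.inf f)) := by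
      have := projective_quotient_finsetInf_sup_finsetSup hf hQ I {j}
      rwa [Finset.sup_singleton, sup_comm] at this
    rw [Finset.inf_insert, Finset.sup_insert, dualAnnihilator_inf_of_projective, ih]

end Dual

theorem statement1_general {ι : Type*} (f : ι → Submodule R M)
    (hQ : ∀ J : Finset ι, Module.Projective R (M ⧸ J.sup f))
    (hf : GeneratesDistribLattice (Set.range f)) (I : Finset ι) :
    (Function.Injective (I.sup f).mkQ.dualMap ∧
      LinearMap.range (I.sup f).mkQ.dualMap = I.inf fun i => (f i).dualAnnihilator) ∧
    Nonempty (Module.Dual R (M ⧸ I.sup f) ≃ₗ[R] ↥(I.inf fun i => (f i).dualAnnihilator)) ∧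
    (Function.Surjective (I.inf f).subtype.dualMap ∧
      LinearMap.ker (I.inf f).subtype.dualMap = I.sup fun i => (f i).dualAnnihilator) ∧
    Nonempty ((Module.Dual R M ⧸ (I.sup fun i => (f i).dualAnnihilator)) ≃ₗ[R]
      Module.Dual R ↥(I.inf f)) := by
  have := projective_quotient_finsetInf hf hQ I
  have injective : Function.Injective (I.sup f).mkQ.dualMap :=
    LinearMap.dualMap_injective_of_surjective (Submodule.mkQ_surjective _)
  have range_eq : LinearMap.range (I.sup f).mkQ.dualMap = I.inf fun i => (f i).dualAnnihilator := by
    rw [Submodule.range_dualMap_mkQ_eq, dualAnnihilator_finsetSup]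
  have surjective : Function.Surjective (I.inf f).subtype.dualMap :=
    dualRestrict_surjective_of_projective (I.inf f)
  have ker_eq : LinearMap.ker (I.inf f).subtype.dualMap = I.sup fun i => (f i).dualAnnihilator := by
    rw [← Submodule.dualRestrict_def, Submodule.dualRestrict_ker_eq_dualAnnihilator,
      dualAnnihilator_finsetInf hf hQ]
  exact ⟨⟨injective, range_eq⟩,
    ⟨(LinearEquiv.ofInjective _ injective).trans (LinearEquiv.ofEq _ _ range_eq)⟩,
    ⟨surjective, ker_eq⟩,
    ⟨(Submodule.quotEquivOfEq _ _ ker_eq.symm).trans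
      (LinearMap.quotKerEquivOfSurjective _ surjective)⟩⟩

theorem statement1 {n : ℕ} (hn : 1 ≤ n) (Mf : Fin n → Submodule R M)
    (hM : Module.Projective R M)
    (hQ : ∀ I : Finset (Fin n), Module.Projective R (M ⧸ sigmaSub Mf I))
    (hdist : IsDistributiveFamily Mf) :
    ∀ I : Finset (Fin n),
      -- (i) the dual of the projection `M → M/Σ_I` is injective with image `⋂_{i∈I} M_i^∨`
      (Function.Injective ((sigmaSub Mf I).mkQ.dualMap) ∧
        LinearMap.range ((sigmaSub Mf I).mkQ.dualMap) =
          I.inf fun i => (Mf i).dualAnnihilator) ∧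
      Nonempty (Module.Dual R (M ⧸ sigmaSub Mf I) ≃ₗ[R]
        ↥(I.inf fun i => (Mf i).dualAnnihilator)) ∧
      -- (ii) the restriction map `M^* → (Π_I)^*` is surjective with kernel `∑_{i∈I} M_i^∨`
      (Function.Surjective ((piSub Mf I).subtype.dualMap) ∧
        LinearMap.ker ((piSub Mf I).subtype.dualMap) =
          I.sup fun i => (Mf i).dualAnnihilator) ∧
      Nonempty ((Module.Dual R M ⧸ (I.sup fun i => (Mf i).dualAnnihilator)) ≃ₗ[R]
        Module.Dual R ↥(piSub Mf I)) :=
  fun I => statement1_general Mf hQ hdist I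
end

section
/- Assume that M is a flat R-module, that M/Σ_I is a flat R-module for every subset I ⊆ {1,…,n}, and that the collection M_1,…,M_n is distributive. Then for every subset I ⊆ {1,…,n} the R-module L^I := Π_{{1,…,n}∖I} / (Π_{{1,…,n}∖I} ∩ Σ_I) is flat. -/
/-!
STATEMENT 3: if `M` and all quotients `M/Σ_I` are flat `R`-modules and the collection
`M_1, …, M_n` is distributive, then for every `I ⊆ {1,…,n}` the `R`-module
`L^I = Π_{{1,…,n}∖I} / (Π_{{1,…,n}∖I} ∩ Σ_I)` is flat.
-/

variable {R M : Type*} [CommRing R] [AddCommGroup M] [Module R M]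

/-- `L^I = Π_{{1,…,n}∖I} / (Π_{{1,…,n}∖I} ∩ Σ_I)`. -/
abbrev subquotL {n : ℕ} (Mf : Fin n → Submodule R M) (I : Finset (Fin n)) : Type _ :=
  ↥(piSub Mf Iᶜ) ⧸ Submodule.comap (piSub Mf Iᶜ).subtype (sigmaSub Mf I)

/-!
The second isomorphism theorem gives a short exact sequence
`0 → p / (p ∩ q) → M / q → M / (p + q) → 0`. Since flat modules are closed under kernels of
surjections, it reduces the claim to flatness of `M / (Π_J + Σ_I)`, which is proved by induction
on `J`: distributivity rewrites `(M_j ∩ Π_J) + Σ_I` as the intersection of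
`M_j + Σ_I = Σ_{I ∪ {j}}` and `Π_J + Σ_I`, and the quotient by an intersection `p ∩ q` is an
extension of `M / p` by `p / (p ∩ q)`.
-/

section FlatExact

variable {A B C : Type*} [AddCommGroup A] [Module R A] [AddCommGroup B] [Module R B]
  [AddCommGroup C] [Module R C] {f : A →ₗ[R] B} {g : B →ₗ[R] C}

theorem flat_left_of_exact [Module.Flat R B] [Module.Flat R C] (hf : Function.Injective f)
    (hfg : Function.Exact f g) (hg : Function.Surjective g) : Module.Flat R A := by
  rw [Module.Flat.iff_rTensor_injective']
  intro I
  have square : f.lTensor R ∘ₗ I.subtype.rTensor A = I.subtype.rTensor B ∘ₗ f.lTensor I := by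
    rw [LinearMap.lTensor_comp_rTensor, LinearMap.rTensor_comp_lTensor]
  have lTensor_injective : Function.Injective (f.lTensor I) :=
    LinearMap.lTensor_injective_of_exact_of_flat g hg f hf hfg I
  have rTensor_injective : Function.Injective (I.subtype.rTensor B) :=
    Module.Flat.rTensor_preserves_injective_linearMap _ I.injective_subtype
  refine Function.Injective.of_comp (f := f.lTensor R) ?_
  rw [← LinearMap.coe_comp, square, LinearMap.coe_comp]
  exact rTensor_injective.comp lTensor_injective

theorem flat_middle_of_exact [Module.Flat R A] [Module.Flat R C] (hf : Function.Injective f)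
    (hfg : Function.Exact f g) (hg : Function.Surjective g) : Module.Flat R B := by
  rw [Module.Flat.iff_rTensor_injective']
  intro I
  have zero_exact (N : Type _) [AddCommGroup N] [Module R N] :
      Function.Exact (0 : PUnit →ₗ[R] TensorProduct R N A) (f.lTensor N) :=
    (LinearMap.exact_zero_iff_injective _ _).2
      (LinearMap.lTensor_injective_of_exact_of_flat g hg f hf hfg N)
  exact LinearMap.injective_of_surjective_of_injective_of_injective
    0 (f.lTensor I) (g.lTensor I) 0 (f.lTensor R) (g.lTensor R)
    (0 : PUnit →ₗ[R] PUnit) (I.subtype.rTensor A) (I.subtype.rTensor B) (I.subtype.rTensor C)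
    (by simp)
    (by rw [LinearMap.lTensor_comp_rTensor, LinearMap.rTensor_comp_lTensor])
    (by rw [LinearMap.lTensor_comp_rTensor, LinearMap.rTensor_comp_lTensor])
    (zero_exact I) (lTensor_exact I hfg hg) (zero_exact R)
    (Function.surjective_to_subsingleton _)
    (Module.Flat.rTensor_preserves_injective_linearMap _ I.injective_subtype)
    (Module.Flat.rTensor_preserves_injective_linearMap _ I.injective_subtype)

end FlatExact

section FlatQuotient

variable (p q : Submodule R M)

theorem injective_mapQ_comap_subtype :
    Function.Injective ((q.comap p.subtype).mapQ q p.subtype le_rfl) := by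
  rw [← LinearMap.ker_eq_bot, Submodule.ker_mapQ, Submodule.mkQ_map_self]

theorem exact_mapQ_comap_subtype_factor :
    Function.Exact ((q.comap p.subtype).mapQ q p.subtype le_rfl)
      (Submodule.factor (le_sup_right : q ≤ p ⊔ q)) := by
  rw [LinearMap.exact_iff, Submodule.range_mapQ, Submodule.range_subtype, Submodule.factor,
    Submodule.ker_mapQ, Submodule.comap_id, Submodule.map_sup, Submodule.mkQ_map_self, sup_bot_eq]

theorem flat_quotient_comap_subtype [Module.Flat R (M ⧸ q)] [Module.Flat R (M ⧸ (p ⊔ q))] :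
    Module.Flat R (p ⧸ q.comap p.subtype) :=
  flat_left_of_exact (injective_mapQ_comap_subtype p q) (exact_mapQ_comap_subtype_factor p q)
    (Submodule.factor_surjective _)

theorem flat_quotient_of_flat_quotient_sup [Module.Flat R (p ⧸ q.comap p.subtype)]
    [Module.Flat R (M ⧸ (p ⊔ q))] : Module.Flat R (M ⧸ q) :=
  flat_middle_of_exact (injective_mapQ_comap_subtype p q) (exact_mapQ_comap_subtype_factor p q)
    (Submodule.factor_surjective _)

theorem flat_quotient_inf [Module.Flat R (M ⧸ p)] [Module.Flat R (M ⧸ q)]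
    [Module.Flat R (M ⧸ (p ⊔ q))] : Module.Flat R (M ⧸ (p ⊓ q)) := by
  have : Module.Flat R (p ⧸ (p ⊓ q).comap p.subtype) := by
    rw [Submodule.comap_inf, Submodule.comap_subtype_self, top_inf_eq]
    exact flat_quotient_comap_subtype p q
  have : Module.Flat R (M ⧸ (p ⊔ p ⊓ q)) := by rwa [sup_inf_self]
  exact flat_quotient_of_flat_quotient_sup p (p ⊓ q)

end FlatQuotient

/-- The sublattice generated by `s` is distributive, stated in the ambient lattice as distributivity
on `latticeClosure s`. It extends `IsDistributiveFamily` to families over any index type: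
`IsDistributiveFamily Mf` is the case `s = Set.range Mf`. -/
def GeneratesDistribSublattice {α : Type*} [Lattice α] (s : Set α) : Prop :=
  ∀ a ∈ latticeClosure s, ∀ b ∈ latticeClosure s, ∀ c ∈ latticeClosure s,
    a ⊓ (b ⊔ c) = (a ⊓ b) ⊔ (a ⊓ c)

namespace GeneratesDistribSublattice

variable {α ι : Type*} [Lattice α]

theorem sup_inf_right {s : Set α} (hs : GeneratesDistribSublattice s) {a b c : α}
    (ha : a ∈ latticeClosure s) (hb : b ∈ latticeClosure s) (hc : c ∈ latticeClosure s) :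
    (a ⊓ b) ⊔ c = (a ⊔ c) ⊓ (b ⊔ c) := by
  symm
  calc (a ⊔ c) ⊓ (b ⊔ c)
      = ((a ⊔ c) ⊓ b) ⊔ ((a ⊔ c) ⊓ c) :=
        hs _ (isSublattice_latticeClosure.supClosed ha hc) b hb c hc
    _ = ((b ⊓ a) ⊔ (b ⊓ c)) ⊔ c := by
        rw [inf_eq_right.2 (le_sup_right : c ≤ a ⊔ c), inf_comm, hs b hb a ha c hc]
    _ = (a ⊓ b) ⊔ c := by
        rw [sup_assoc, sup_eq_right.2 (inf_le_right : b ⊓ c ≤ c), inf_comm]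

theorem finset_inf_insert_sup_finset_sup [BoundedOrder α] [DecidableEq ι] {f : ι → α}
    (hf : GeneratesDistribSublattice (Set.range f)) (j : ι) (J I : Finset ι) :
    (insert j J).inf f ⊔ I.sup f = (insert j I).sup f ⊓ (J.inf f ⊔ I.sup f) := by
  have hmem (i : ι) : f i ∈ latticeClosure (Set.range f) := subset_latticeClosure ⟨i, rfl⟩
  rw [Finset.inf_insert, Finset.sup_insert]
  -- `Finset.inf ∅` and `Finset.sup ∅` need not lie in the generated sublattice.
  rcases J.eq_empty_or_nonempty with rfl | hJ
  · simp
  rcases I.eq_empty_or_nonempty with rfl | hI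
  · simp
  exact hf.sup_inf_right (hmem j)
    (isSublattice_latticeClosure.infClosed.finsetInf_mem hJ fun i _ ↦ hmem i)
    (isSublattice_latticeClosure.supClosed.finsetSup_mem hI fun i _ ↦ hmem i)

end GeneratesDistribSublattice

section Family

variable {ι : Type*} {N : ι → Submodule R M}

theorem flat_quotient_finset_inf_sup_finset_sup
    (hQ : ∀ I : Finset ι, Module.Flat R (M ⧸ I.sup N))
    (hN : GeneratesDistribSublattice (Set.range N)) (J I : Finset ι) :
    Module.Flat R (M ⧸ (J.inf N ⊔ I.sup N)) := by
  classical
  induction J using Finset.induction_on generalizing I with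
  | empty =>
    rw [Finset.inf_empty, top_sup_eq]
    infer_instance
  | insert j J _ ih =>
    have sup_eq : (insert j I).sup N ⊔ (J.inf N ⊔ I.sup N) = J.inf N ⊔ (insert j I).sup N := by
      rw [sup_left_comm, sup_eq_left.2 (Finset.sup_mono (Finset.subset_insert j I))]
    have : Module.Flat R (M ⧸ ((insert j I).sup N ⊔ (J.inf N ⊔ I.sup N))) := by
      rw [sup_eq]
      exact ih (insert j I)
    have := hQ (insert j I)
    have := ih I
    rw [hN.finset_inf_insert_sup_finset_sup j J I]
    exact flat_quotient_inf _ _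

theorem statement3_general (hQ : ∀ I : Finset ι, Module.Flat R (M ⧸ I.sup N))
    (hN : GeneratesDistribSublattice (Set.range N)) (J I : Finset ι) :
    Module.Flat R (↥(J.inf N) ⧸ (I.sup N).comap (J.inf N).subtype) := by
  have := hQ I
  have := flat_quotient_finset_inf_sup_finset_sup hQ hN J I
  exact flat_quotient_comap_subtype (J.inf N) (I.sup N)

end Family

theorem statement3 {n : ℕ} (hn : 1 ≤ n) (Mf : Fin n → Submodule R M)
    (hM : Module.Flat R M)
    (hQ : ∀ I : Finset (Fin n), Module.Flat R (M ⧸ sigmaSub Mf I))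
    (hdist : IsDistributiveFamily Mf) :
    ∀ I : Finset (Fin n), Module.Flat R (subquotL Mf I) := by
  exact fun I ↦ statement3_general hQ hdist Iᶜ I
end

section
/- Let R be a commutative ring and let M^1, …, M^ℓ be R-modules such that each M^k is equipped with a finite ascending chain of submodules 0 = F^k_0 ⊆ F^k_1 ⊆ ⋯ ⊆ F^k_{n_k} = M^k whose successive quotients G^k_j := F^k_j/F^k_{j−1} are flat R-modules. Then each M^k is a flat R-module, and the tensor product M^1 ⊗_R M^2 ⊗_R ⋯ ⊗_R M^ℓ admits a finite ascending chain of submodules whose successive quotients are, up to isomorphism, exactly the R-modules G^1_{i_1} ⊗_R G^2_{i_2} ⊗_R ⋯ ⊗_R G^ℓ_{i_ℓ}, with exactly one successive quotient for each tuple (i_1,…,i_ℓ) with 1 ≤ i_k ≤ n_k for all k. -/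
/-!
STATEMENT 10: if `M^1, …, M^ℓ` are `R`-modules each equipped with a finite filtration whose
graded pieces are flat, then each `M^k` is flat, and `M^1 ⊗_R ⋯ ⊗_R M^ℓ` admits a finite
filtration whose graded pieces are, up to isomorphism, exactly the tensor products
`G^1_{i_1} ⊗_R ⋯ ⊗_R G^ℓ_{i_ℓ}`, one for each tuple `(i_1, …, i_ℓ)`.
-/

/-- The subquotient `q / p` of two submodules of `M`, i.e. `q ⧸ (p ∩ q)`. -/
abbrev subquot {R M : Type*} [CommRing R] [AddCommGroup M] [Module R M]
    (p q : Submodule R M) : Type _ :=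
  q ⧸ (Submodule.comap q.subtype p)

/-!
Tensoring a short exact sequence with any module keeps it exact when its right-hand term is flat.
Hence, if the graded pieces `G i` of `M` are flat and `N` is filtered with graded pieces `H j`,
climbing the filtration of `M` builds `M ⊗ N` by successive extensions by the modules `G i ⊗ N`.
Each of these is filtered with graded pieces `G i ⊗ H j`, again because `G i` is flat, and the
filtrations are spliced along the extensions. Only one of the two tensor factors needs flat graded
pieces, so induction on the number of factors gives the result as soon as all factors but one have
them.
-/

open scoped TensorProduct

theorem flat_of_exact {R A B C : Type*} [CommRing R] [AddCommGroup A] [Module R A]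
    [AddCommGroup B] [Module R B] [AddCommGroup C] [Module R C] [Module.Flat R A] [Module.Flat R C]
    {f : A →ₗ[R] B} {g : B →ₗ[R] C} (hf : Function.Injective f) (hfg : Function.Exact f g)
    (hg : Function.Surjective g) : Module.Flat R B := by
  refine Module.Flat.iff_rTensor_preserves_injective_linearMap.mpr fun P Q _ _ _ _ u hu => ?_
  rw [injective_iff_map_eq_zero]
  intro x hx
  have x_mem_ker : g.lTensor P x = 0 := by
    apply Module.Flat.rTensor_preserves_injective_linearMap (M := C) u hu
    rw [map_zero, ← LinearMap.comp_apply, LinearMap.rTensor_comp_lTensor,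
      ← LinearMap.lTensor_comp_rTensor, LinearMap.comp_apply, hx, map_zero]
  obtain ⟨a, rfl⟩ := (lTensor_exact P hfg hg x).mp x_mem_ker
  have a_eq_zero : a = 0 := by
    apply Module.Flat.rTensor_preserves_injective_linearMap (M := A) u hu
    apply LinearMap.lTensor_injective_of_exact_of_flat g hg f hf hfg Q
    rw [map_zero, map_zero, ← LinearMap.comp_apply, LinearMap.lTensor_comp_rTensor,
      ← LinearMap.rTensor_comp_lTensor, LinearMap.comp_apply, hx]
  rw [a_eq_zero, map_zero]

/-- The tensor product of a family indexed by `Option ι` splits off the factor at `none`. -/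
noncomputable def tensorPiOptionEquiv (R : Type*) [CommRing R] {ι : Type*}
    (M : Option ι → Type*) [∀ k, AddCommGroup (M k)] [∀ k, Module R (M k)] :
    (M none ⊗[R] (⨂[R] k, M (some k))) ≃ₗ[R] ⨂[R] k, M k :=
  TensorProduct.comm R _ _ ≪≫ₗ
    TensorProduct.congr (LinearEquiv.refl R _)
      (PiTensorProduct.subsingletonEquiv (s := fun _ : PUnit.{1} => M none) PUnit.unit).symm ≪≫ₗ
    PiTensorProduct.tmulEquivDep R (fun k => M ((Equiv.optionEquivSumPUnit.{0} ι).symm k)) ≪≫ₗ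
    (PiTensorProduct.reindex R M (Equiv.optionEquivSumPUnit ι)).symm

theorem flat_piTensorProduct {R ι : Type*} [CommRing R] [Finite ι] (M : ι → Type*)
    [∀ k, AddCommGroup (M k)] [∀ k, Module R (M k)] [∀ k, Module.Flat R (M k)] :
    Module.Flat R (⨂[R] k, M k) := by
  induction ι using Finite.induction_empty_option with
  | of_equiv e ih =>
    have := ih fun k => M (e k)
    exact Module.Flat.of_linearEquiv (PiTensorProduct.reindex R M e.symm)
  | h_empty => exact Module.Flat.of_linearEquiv (PiTensorProduct.isEmptyEquiv PEmpty)
  | h_option ih =>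
    have := ih fun k => M (some k)
    exact Module.Flat.of_linearEquiv (tensorPiOptionEquiv R M).symm

section Subquot

variable {R M N : Type*} [CommRing R] [AddCommGroup M] [Module R M] [AddCommGroup N] [Module R N]

theorem nonempty_subquot_map_equiv {f : M →ₗ[R] N} (hf : Function.Injective f)
    (p q : Submodule R M) : Nonempty (subquot (p.map f) (q.map f) ≃ₗ[R] subquot p q) := by
  refine ⟨(Submodule.Quotient.equiv _ _ (Submodule.equivMapOfInjective f hf q) ?_).symm⟩
  ext x
  obtain ⟨y, rfl⟩ := (Submodule.equivMapOfInjective f hf q).surjective x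
  simp [hf.eq_iff]

theorem nonempty_subquot_top_equiv (p : Submodule R M) :
    Nonempty (subquot p ⊤ ≃ₗ[R] M ⧸ p) := by
  refine ⟨Submodule.Quotient.equiv _ _ Submodule.topEquiv ?_⟩
  ext x
  simp

end Subquot

/-- `HasListFiltration R G L M` says that `M` has a finite descending chain of submodules from `M`
to `0` whose successive quotients are, in this order, isomorphic to the modules `G i` for `i` in the
list `L`. It is defined by recursion on `L`, the tail of the chain being a chain of submodules of
the first proper term. -/
def HasListFiltration (R : Type*) [CommRing R] {ι : Type*} (G : ι → Type*)
    [∀ i, AddCommGroup (G i)] [∀ i, Module R (G i)] :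
    List ι → ∀ (M : Type*) [AddCommGroup M] [Module R M], Prop
  | [], M, _, _ => Subsingleton M
  | i :: L, M, _, _ => ∃ q : Submodule R M, HasListFiltration R G L q ∧
      Nonempty ((M ⧸ q) ≃ₗ[R] G i)

namespace HasListFiltration

variable {R ι κ M N A B C : Type*} [CommRing R] {G : ι → Type*} [∀ i, AddCommGroup (G i)]
  [∀ i, Module R (G i)] {H : κ → Type*} [∀ j, AddCommGroup (H j)] [∀ j, Module R (H j)]
  [AddCommGroup M] [Module R M] [AddCommGroup N] [Module R N] [AddCommGroup A] [Module R A]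
  [AddCommGroup B] [Module R B] [AddCommGroup C] [Module R C] {L : List ι} {L' : List κ}

theorem of_linearEquiv (h : HasListFiltration R G L M) (e : M ≃ₗ[R] N) :
    HasListFiltration R G L N := by
  induction L generalizing M N with
  | nil =>
    have : Subsingleton M := h
    exact e.symm.injective.subsingleton
  | cons i L ih =>
    obtain ⟨q, hq, ⟨φ⟩⟩ := h
    exact ⟨q.map e.toLinearMap, ih hq (e.submoduleMap q),
      ⟨(Submodule.Quotient.equiv q _ e rfl).symm ≪≫ₗ φ⟩⟩

theorem cons_of_exact {i : ι} {f : A →ₗ[R] B} {g : B →ₗ[R] G i} (hf : Function.Injective f)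
    (hfg : Function.Exact f g) (hg : Function.Surjective g) (h : HasListFiltration R G L A) :
    HasListFiltration R G (i :: L) B :=
  ⟨LinearMap.range f, h.of_linearEquiv (LinearEquiv.ofInjective f hf),
    ⟨hfg.linearEquivOfSurjective hg⟩⟩

theorem append_of_exact {L₁ L₂ : List ι} {f : A →ₗ[R] B} {g : B →ₗ[R] C}
    (hf : Function.Injective f) (hfg : Function.Exact f g) (hg : Function.Surjective g)
    (hC : HasListFiltration R G L₁ C) (hA : HasListFiltration R G L₂ A) :
    HasListFiltration R G (L₁ ++ L₂) B := by
  induction L₁ generalizing B C with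
  | nil =>
    have : Subsingleton C := hC
    have f_surjective : Function.Surjective f := fun x => (hfg x).mp (Subsingleton.elim _ _)
    exact hA.of_linearEquiv (LinearEquiv.ofBijective f ⟨hf, f_surjective⟩)
  | cons i L₁ ih =>
    obtain ⟨q, hq, ⟨φ⟩⟩ := hC
    have f_mem (a : A) : f a ∈ q.comap g := by
      simp [hfg.apply_apply_eq_zero]
    have preimage_filtered : HasListFiltration R G (L₁ ++ L₂) (q.comap g) := by
      refine ih (f := f.codRestrict (q.comap g) f_mem) (g := g.submoduleComap q)
        (fun a b hab => hf congr($hab)) (fun x => ?_)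
        (g.submoduleComap_surjective_of_surjective q hg) hq
      simpa [Subtype.ext_iff] using hfg x
    refine cons_of_exact (f := (q.comap g).subtype) (g := φ.toLinearMap ∘ₗ q.mkQ ∘ₗ g)
      (q.comap g).subtype_injective (fun x => ?_) ?_ preimage_filtered
    · simp
    · exact φ.surjective.comp (q.mkQ_surjective.comp hg)

theorem map_iff {σ : κ → ι} (e : ∀ j, G (σ j) ≃ₗ[R] H j) :
    HasListFiltration R G (L'.map σ) M ↔ HasListFiltration R H L' M := by
  induction L' generalizing M with
  | nil => rfl
  | cons j L' ih =>
    exact exists_congr fun q => and_congr ih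
      ⟨Nonempty.map (· ≪≫ₗ e j), Nonempty.map (· ≪≫ₗ (e j).symm)⟩

theorem flat [∀ i, Module.Flat R (G i)] (h : HasListFiltration R G L M) : Module.Flat R M := by
  induction L generalizing M with
  | nil =>
    have : Subsingleton M := h
    infer_instance
  | cons i L ih =>
    obtain ⟨q, hq, ⟨φ⟩⟩ := h
    have := ih hq
    have := Module.Flat.of_linearEquiv φ
    exact flat_of_exact q.subtype_injective (LinearMap.exact_subtype_mkQ q) q.mkQ_surjective

theorem lTensor [Module.Flat R A] (h : HasListFiltration R G L M) :
    HasListFiltration R (fun i => A ⊗[R] G i) L (A ⊗[R] M) := by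
  induction L generalizing M with
  | nil =>
    have : Subsingleton M := h
    exact inferInstanceAs (Subsingleton (A ⊗[R] M))
  | cons i L ih =>
    obtain ⟨q, hq, ⟨φ⟩⟩ := h
    have hφ : Function.Surjective (φ.toLinearMap ∘ₗ q.mkQ) := φ.surjective.comp q.mkQ_surjective
    exact cons_of_exact
      (Module.Flat.lTensor_preserves_injective_linearMap _ q.subtype_injective)
      (lTensor_exact A (fun x => by simp) hφ) (LinearMap.lTensor_surjective A hφ) (ih hq)

theorem tensor [∀ i, Module.Flat R (G i)] (hM : HasListFiltration R G L M)
    (hN : HasListFiltration R H L' N) :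
    HasListFiltration R (fun i : ι × κ => G i.1 ⊗[R] H i.2) (L ×ˢ L') (M ⊗[R] N) := by
  induction L generalizing M with
  | nil =>
    have : Subsingleton M := hM
    exact inferInstanceAs (Subsingleton (M ⊗[R] N))
  | cons i L ih =>
    obtain ⟨q, hq, ⟨φ⟩⟩ := hM
    have hφ : Function.Surjective (φ.toLinearMap ∘ₗ q.mkQ) := φ.surjective.comp q.mkQ_surjective
    have hqφ : Function.Exact q.subtype (φ.toLinearMap ∘ₗ q.mkQ) := fun x => by simp
    have q_tensor_injective : Function.Injective (q.subtype.rTensor N) :=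
      (LinearMap.lTensor_inj_iff_rTensor_inj _ _).mp
        (LinearMap.lTensor_injective_of_exact_of_flat _ hφ _ q.subtype_injective hqφ N)
    have quotient_filtered : HasListFiltration R (fun i : ι × κ => G i.1 ⊗[R] H i.2)
        (L'.map (Prod.mk i)) (G i ⊗[R] N) :=
      (map_iff fun _ => LinearEquiv.refl R _).mpr (hN.lTensor (A := G i))
    exact append_of_exact q_tensor_injective (rTensor_exact N hqφ hφ)
      (LinearMap.rTensor_surjective N hφ) quotient_filtered (ih hq)

theorem exists_antitone_chain (h : HasListFiltration R G L M) :
    ∃ D : Fin (L.length + 1) → Submodule R M, Antitone D ∧ D 0 = ⊤ ∧ D (Fin.last _) = ⊥ ∧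
      ∀ j : Fin L.length, Nonempty (subquot (D j.succ) (D j.castSucc) ≃ₗ[R] G (L.get j)) := by
  induction L generalizing M with
  | nil =>
    have : Subsingleton M := h
    exact ⟨fun _ => ⊤, antitone_const, rfl, Subsingleton.elim _ _, fun j => j.elim0⟩
  | cons i L ih =>
    obtain ⟨q, hq, ⟨φ⟩⟩ := h
    obtain ⟨D, hD, hD_zero, hD_last, hD_gr⟩ := ih hq
    refine ⟨Fin.cons ⊤ fun j => (D j).map q.subtype, ?_, rfl, ?_, fun j => ?_⟩
    · refine Fin.antitone_iff_succ_le.mpr fun j => ?_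
      cases j using Fin.cases with
      | zero => exact le_top
      | succ j => exact Submodule.map_mono (hD j.castSucc_lt_succ.le)
    · exact (congrArg (Submodule.map q.subtype) hD_last).trans (Submodule.map_bot _)
    · cases j using Fin.cases with
      | zero =>
        obtain ⟨ψ⟩ := nonempty_subquot_top_equiv q
        have hq_top : (D 0).map q.subtype = q := by
          rw [hD_zero, Submodule.map_subtype_top]
        change Nonempty (subquot ((D 0).map q.subtype) ⊤ ≃ₗ[R] G i)
        rw [hq_top]
        exact ⟨ψ ≪≫ₗ φ⟩
      | succ j =>
        obtain ⟨ψ⟩ := nonempty_subquot_map_equiv q.subtype_injective (D j.succ) (D j.castSucc)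
        exact (hD_gr j).map (ψ ≪≫ₗ ·)

theorem of_monotone_chain {n : ℕ} {F : Fin (n + 1) → Submodule R M} (hF : Monotone F)
    (hF_zero : F 0 = ⊥) (hF_last : F (Fin.last n) = ⊤) :
    HasListFiltration R (fun j : Fin n => subquot (F j.castSucc) (F j.succ))
      (List.finRange n).reverse M := by
  have initial_segment (m : Fin (n + 1)) :
      HasListFiltration R (fun j : Fin n => subquot (F j.castSucc) (F j.succ))
        ((List.finRange n).take m).reverse (F m) := by
    induction m using Fin.induction with
    | zero =>
      rw [hF_zero]
      exact inferInstanceAs (Subsingleton (⊥ : Submodule R M))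
    | succ j ih =>
      have hle : F j.castSucc ≤ F j.succ := hF j.castSucc_lt_succ.le
      have hlist : ((List.finRange n).take j.succ).reverse =
          j :: ((List.finRange n).take j.castSucc).reverse := by
        simp [List.take_add_one]
      rw [hlist]
      have hexact : Function.Exact (Submodule.inclusion hle)
          (Submodule.mkQ ((F j.castSucc).comap (F j.succ).subtype)) := by
        rw [LinearMap.exact_iff, Submodule.ker_mkQ, Submodule.range_inclusion]
      exact cons_of_exact (Submodule.inclusion_injective hle) hexact
        (Submodule.mkQ_surjective _) ih
  have hlast := initial_segment (Fin.last n)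
  rw [hF_last, Fin.val_last, List.take_of_length_le (List.length_finRange).le] at hlast
  exact hlast.of_linearEquiv Submodule.topEquiv

end HasListFiltration

/-- `HasFiltration R G M` says that `M` has a finite filtration whose graded pieces are, up to
isomorphism and in some order, the modules `G i`, each index `i` occurring exactly once. -/
def HasFiltration (R : Type*) [CommRing R] {ι : Type*} (G : ι → Type*) [∀ i, AddCommGroup (G i)]
    [∀ i, Module R (G i)] (M : Type*) [AddCommGroup M] [Module R M] : Prop :=
  ∃ L : List ι, L.Nodup ∧ (∀ i, i ∈ L) ∧ HasListFiltration R G L M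

namespace HasFiltration

variable {R ι κ M N : Type*} [CommRing R] {G : ι → Type*} [∀ i, AddCommGroup (G i)]
  [∀ i, Module R (G i)] {H : κ → Type*} [∀ j, AddCommGroup (H j)] [∀ j, Module R (H j)]
  [AddCommGroup M] [Module R M] [AddCommGroup N] [Module R N]

theorem congr (h : HasFiltration R G M) (σ : κ ≃ ι) (e : ∀ j, G (σ j) ≃ₗ[R] H j)
    (e' : M ≃ₗ[R] N) : HasFiltration R H N := by
  obtain ⟨L, hL, hmem, hfil⟩ := h
  refine ⟨L.map σ.symm, hL.map σ.symm.injective, fun j => ?_, ?_⟩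
  · exact List.mem_map.mpr ⟨σ j, hmem _, σ.symm_apply_apply j⟩
  · refine (HasListFiltration.map_iff e).mp ?_
    simpa using hfil.of_linearEquiv e'

theorem of_unique [Unique ι] (e : M ≃ₗ[R] G default) : HasFiltration R G M :=
  ⟨[default], List.nodup_singleton _, fun i => List.mem_singleton.mpr (Unique.eq_default i), ⊥,
    inferInstanceAs (Subsingleton (⊥ : Submodule R M)), ⟨Submodule.quotEquivOfEqBot _ rfl ≪≫ₗ e⟩⟩

theorem of_monotone_chain {n : ℕ} {F : Fin (n + 1) → Submodule R M} (hF : Monotone F)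
    (hF_zero : F 0 = ⊥) (hF_last : F (Fin.last n) = ⊤) :
    HasFiltration R (fun j : Fin n => subquot (F j.castSucc) (F j.succ)) M :=
  ⟨_, List.nodup_reverse.mpr (List.nodup_finRange n), by simp,
    HasListFiltration.of_monotone_chain hF hF_zero hF_last⟩

theorem exists_monotone_chain [Fintype ι] {n : ℕ} (hn : Fintype.card ι = n)
    (h : HasFiltration R G M) :
    ∃ (e : ι ≃ Fin n) (F : Fin (n + 1) → Submodule R M),
      Monotone F ∧ F 0 = ⊥ ∧ F (Fin.last n) = ⊤ ∧
      ∀ i, Nonempty (subquot (F (e i).castSucc) (F (e i).succ) ≃ₗ[R] G i) := by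
  classical
  obtain ⟨L, hL, hmem, hfil⟩ := h
  let enum : Fin L.length ≃ ι := hL.getEquivOfForallMemList L hmem
  obtain rfl : L.length = n := by
    simpa [hn] using Fintype.card_congr enum
  obtain ⟨D, hD, hD_zero, hD_last, hD_gr⟩ := hfil.exists_antitone_chain
  refine ⟨enum.symm.trans Fin.revPerm, D ∘ Fin.rev, hD.comp Fin.rev_anti, ?_, ?_, fun i => ?_⟩
  · simp [hD_last]
  · simp [hD_zero]
  · obtain ⟨j, rfl⟩ := enum.surjective i
    have position : (enum.symm.trans Fin.revPerm) (enum j) = j.rev := by simp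
    rw [position, Function.comp_apply, Function.comp_apply, Fin.rev_castSucc, Fin.rev_succ,
      Fin.rev_rev]
    exact hD_gr j

theorem flat [∀ i, Module.Flat R (G i)] (h : HasFiltration R G M) : Module.Flat R M := by
  obtain ⟨L, -, -, hfil⟩ := h
  exact hfil.flat

theorem tensor_of_flat_left [∀ i, Module.Flat R (G i)] (hM : HasFiltration R G M)
    (hN : HasFiltration R H N) :
    HasFiltration R (fun i : ι × κ => G i.1 ⊗[R] H i.2) (M ⊗[R] N) := by
  obtain ⟨L, hL, hL_mem, hM⟩ := hM
  obtain ⟨L', hL', hL'_mem, hN⟩ := hN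
  exact ⟨L ×ˢ L', hL.product hL', fun i => List.mem_product.mpr ⟨hL_mem _, hL'_mem _⟩,
    hM.tensor hN⟩

theorem tensor_of_flat_right [∀ j, Module.Flat R (H j)] (hM : HasFiltration R G M)
    (hN : HasFiltration R H N) :
    HasFiltration R (fun i : ι × κ => G i.1 ⊗[R] H i.2) (M ⊗[R] N) :=
  (hN.tensor_of_flat_left hM).congr (Equiv.prodComm ι κ) (fun _ => TensorProduct.comm R _ _)
    (TensorProduct.comm R N M)

theorem piTensorProduct {ι : Type*} [Finite ι] {M : ι → Type*} [∀ k, AddCommGroup (M k)]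
    [∀ k, Module R (M k)] {κ : ι → Type*} {G : ∀ k, κ k → Type*} [∀ k i, AddCommGroup (G k i)]
    [∀ k i, Module R (G k i)] {S : Set ι} (hS : Sᶜ.Subsingleton)
    (hflat : ∀ k ∈ S, ∀ i, Module.Flat R (G k i)) (h : ∀ k, HasFiltration R (G k) (M k)) :
    HasFiltration R (fun i : ∀ k, κ k => ⨂[R] k, G k (i k)) (⨂[R] k, M k) := by
  induction ι using Finite.induction_empty_option with
  | of_equiv e ih =>
    exact (ih (hS.preimage e.injective) (fun k => hflat (e k)) fun k => h (e k)).congr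
      (Equiv.piCongrLeft κ e).symm
      (fun i => (PiTensorProduct.reindex R (fun k => G k (i k)) e.symm).symm)
      (PiTensorProduct.reindex R M e.symm).symm
  | h_empty =>
    exact of_unique (PiTensorProduct.isEmptyEquiv PEmpty ≪≫ₗ
      (PiTensorProduct.isEmptyEquiv PEmpty).symm)
  | h_option ih =>
    have tail := ih (hS.preimage (Option.some_injective _)) (fun k => hflat (some k))
      fun k => h (some k)
    suffices HasFiltration R
        (fun i : κ none × (∀ k, κ (some k)) => G none i.1 ⊗[R] (⨂[R] k, G (some k) (i.2 k)))
        (M none ⊗[R] (⨂[R] k, M (some k))) from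
      this.congr Equiv.piOptionEquivProd (fun i => tensorPiOptionEquiv R fun k => G k (i k))
        (tensorPiOptionEquiv R M)
    by_cases hnone : none ∈ S
    · have := hflat none hnone
      exact (h none).tensor_of_flat_left tail
    · have (k) (i) : Module.Flat R (G (some k) i) := by
        refine hflat _ (by_contra fun hsome => ?_) i
        exact Option.some_ne_none k (hS hsome hnone)
      have (i : ∀ k, κ (some k)) := flat_piTensorProduct (R := R) fun k => G (some k) (i k)
      exact (h none).tensor_of_flat_right tail

end HasFiltration

theorem statement10_general {R ι : Type*} [CommRing R] [Fintype ι] (M : ι → Type*)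
    [∀ k, AddCommGroup (M k)] [∀ k, Module R (M k)] (n : ι → ℕ)
    (F : ∀ k, Fin (n k + 1) → Submodule R (M k)) (hF : ∀ k, Monotone (F k))
    (hF_zero : ∀ k, F k 0 = ⊥) (hF_last : ∀ k, F k (Fin.last (n k)) = ⊤) (S : Set ι)
    (hS : Sᶜ.Subsingleton)
    (hflat : ∀ k ∈ S, ∀ j : Fin (n k),
      Module.Flat R (subquot (F k j.castSucc) (F k j.succ))) :
    (∀ k ∈ S, Module.Flat R (M k)) ∧
    ∃ (e : (∀ k, Fin (n k)) ≃ Fin (∏ k, n k))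
      (F' : Fin ((∏ k, n k) + 1) → Submodule R (⨂[R] k, M k)),
      Monotone F' ∧ F' 0 = ⊥ ∧ F' (Fin.last (∏ k, n k)) = ⊤ ∧
      ∀ i : ∀ k, Fin (n k),
        Nonempty (subquot (F' (e i).castSucc) (F' (e i).succ) ≃ₗ[R]
          ⨂[R] k, subquot (F k (i k).castSucc) (F k (i k).succ)) := by
  classical
  have filtered k := HasFiltration.of_monotone_chain (hF k) (hF_zero k) (hF_last k)
  refine ⟨fun k hk => ?_, ?_⟩
  · have := hflat k hk
    exact (filtered k).flat
  · exact (HasFiltration.piTensorProduct hS hflat filtered).exists_monotone_chain (by simp)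

theorem statement10 {R : Type*} [CommRing R] (ℓ : ℕ) (Mk : Fin ℓ → Type*)
    [∀ k, AddCommGroup (Mk k)] [∀ k, Module R (Mk k)]
    (nk : Fin ℓ → ℕ)
    (F : ∀ k, Fin (nk k + 1) → Submodule R (Mk k))
    (hFmono : ∀ k, Monotone (F k)) (hF0 : ∀ k, F k 0 = ⊥)
    (hFtop : ∀ k, F k (Fin.last (nk k)) = ⊤)
    (hflat : ∀ k (j : Fin (nk k)),
      Module.Flat R (subquot (F k j.castSucc) (F k j.succ))) :
    (∀ k, Module.Flat R (Mk k)) ∧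
    ∃ (e : ((k : Fin ℓ) → Fin (nk k)) ≃ Fin (∏ k, nk k))
      (F' : Fin ((∏ k, nk k) + 1) → Submodule R (PiTensorProduct R Mk)),
      Monotone F' ∧ F' 0 = ⊥ ∧ F' (Fin.last (∏ k, nk k)) = ⊤ ∧
      ∀ i : (k : Fin ℓ) → Fin (nk k),
        Nonempty
          (subquot (F' (e i).castSucc) (F' (e i).succ) ≃ₗ[R]
            PiTensorProduct R fun k => subquot (F k (i k).castSucc) (F k (i k).succ)) := by
  simpa using statement10_general Mk nk F hFmono hF0 hFtop Set.univ (by simp) fun k _ => hflat k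
end
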